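/- arXiv:1901.11500 — 2 statements merged into one kernel-verified Lean document; each statement's English description precedes it below -/
import Mathlib

section
/- Under assumptions (A2)–(A4), let 0 < η ≤ 1/L, let θ, θ̂ ∈ Θ, let x* ∈ K be the minimizer of f(·,θ) over K, and let x ∈ K. Then the projected gradient step taken with the predicted parameter satisfies ‖Π(x − η ∇_x f(x, θ̂)) − x*‖ ≤ C_{η,λ} ‖x − x*‖ + η C_θ ‖θ − θ̂‖. -/
open RealInnerProductSpace

/-- The contraction constant `C_{η,λ} = √(1 - 2λη/(1+ηλ))`. -/
noncomputable def contractionConst (η lam : ℝ) : ℝ :=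
  Real.sqrt (1 - 2 * lam * η / (1 + η * lam))

/-!
A gradient step followed by projection satisfies the three-point inequality
`2η (F p - F z) + ‖p - z‖² ≤ (1 - ηλ) ‖x - z‖²` for every `z ∈ K`: the variational inequality of
the projection brings in the distances, smoothness bounds `F p` from above and strong convexity
bounds `F z` from below. At the minimizer `z = x*`, strong convexity together with first-order
optimality also gives `F p - F x* ≥ (λ/2) ‖p - x*‖²`, whence
`(1 + ηλ) ‖p - x*‖² ≤ (1 - ηλ) ‖x - x*‖²`, and `C_{η,λ}² = (1 - ηλ) / (1 + ηλ)`. Replacing the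
gradient by an approximation `v` moves the step by `η ‖∇F x - v‖`, and the projection does not
increase distances.
-/

section ContractionConst

variable {η lam a b : ℝ}

lemma contractionConst_eq_sqrt_div (h : 1 + η * lam ≠ 0) :
    contractionConst η lam = √((1 - η * lam) / (1 + η * lam)) := by
  rw [contractionConst, one_sub_div h]
  congr 2
  ring

lemma le_contractionConst_mul (h : 0 < 1 + η * lam) (hb : 0 ≤ b)
    (hab : (1 + η * lam) * a ^ 2 ≤ (1 - η * lam) * b ^ 2) :
    a ≤ contractionConst η lam * b := by
  have hsq : a ^ 2 ≤ (1 - η * lam) / (1 + η * lam) * b ^ 2 := by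
    rw [div_mul_eq_mul_div, le_div_iff₀ h]
    linarith
  calc a ≤ √((1 - η * lam) / (1 + η * lam) * b ^ 2) := Real.le_sqrt_of_sq_le hsq
    _ = contractionConst η lam * b := by
      rw [Real.sqrt_mul' _ (sq_nonneg b), Real.sqrt_sq hb, contractionConst_eq_sqrt_div h.ne']

end ContractionConst

section InnerProductSpace

variable {E : Type*} [NormedAddCommGroup E] [InnerProductSpace ℝ E] {K : Set E}

section Projection

variable {u v p q y : E}

lemma inner_sub_sub_nonpos_of_isMinOn_norm_sub (hK : Convex ℝ K) (hpK : p ∈ K)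
    (hp : IsMinOn (fun w => ‖u - w‖) K p) (hy : y ∈ K) : ⟪u - p, y - p⟫ ≤ 0 :=
  (norm_eq_iInf_iff_real_inner_le_zero hK hpK).1 (hp.iInf_eq hpK).symm y hy

lemma norm_sub_le_norm_sub_of_isMinOn_norm_sub (hK : Convex ℝ K) (hpK : p ∈ K) (hqK : q ∈ K)
    (hp : IsMinOn (fun w => ‖u - w‖) K p) (hq : IsMinOn (fun w => ‖v - w‖) K q) :
    ‖p - q‖ ≤ ‖u - v‖ := by
  have hpq : ⟪u - p, q - p⟫ ≤ 0 := inner_sub_sub_nonpos_of_isMinOn_norm_sub hK hpK hp hqK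
  have hqp : ⟪v - q, p - q⟫ ≤ 0 := inner_sub_sub_nonpos_of_isMinOn_norm_sub hK hqK hq hpK
  have firmly_nonexpansive : ‖p - q‖ ^ 2 ≤ ⟪u - v, p - q⟫ := by
    rw [← real_inner_self_eq_norm_sq]
    simp only [inner_sub_left, inner_sub_right] at hpq hqp ⊢
    linarith
  rcases (norm_nonneg (p - q)).eq_or_lt with hzero | hpos
  · exact hzero ▸ norm_nonneg (u - v)
  · refine le_of_mul_le_mul_right ?_ hpos
    calc ‖p - q‖ * ‖p - q‖ = ‖p - q‖ ^ 2 := (sq _).symm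
      _ ≤ ⟪u - v, p - q⟫ := firmly_nonexpansive
      _ ≤ ‖u - v‖ * ‖p - q‖ := real_inner_le_norm _ _

end Projection

section GradientStep

variable {F : E → ℝ} {G : E → E} {g v x z p q : E} {η L lam : ℝ}

lemma inner_gradient_nonneg_of_isMinOn (hK : Convex ℝ K) (hz : z ∈ K) (hmin : IsMinOn F K z)
    (hg : HasFDerivWithinAt F (innerSL ℝ g) K z) (hp : p ∈ K) : 0 ≤ ⟪g, p - z⟫ :=
  hmin.localize.hasFDerivWithinAt_nonneg hg
    (sub_mem_posTangentConeAt_of_segment_subset (hK.segment_subset hz hp))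

lemma projected_gradient_step_three_point (hη : 0 ≤ η) (hηL : η * L ≤ 1)
    (hupper : F p ≤ F x + ⟪g, p - x⟫ + L / 2 * ‖p - x‖ ^ 2)
    (hlower : F x + ⟪g, z - x⟫ + lam / 2 * ‖z - x‖ ^ 2 ≤ F z)
    (hproj : ⟪x - η • g - p, z - p⟫ ≤ 0) :
    2 * η * (F p - F z) + ‖p - z‖ ^ 2 ≤ (1 - η * lam) * ‖x - z‖ ^ 2 := by
  have hinner : ⟪x - η • g - p, z - p⟫ =
      ⟪x - p, z - p⟫ + η * (⟪g, p - x⟫ - ⟪g, z - x⟫) := by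
    simp only [inner_sub_left, inner_sub_right, real_inner_smul_left]
    ring
  have hpolar : ‖x - z‖ ^ 2 = ‖p - x‖ ^ 2 - 2 * ⟪x - p, z - p⟫ + ‖p - z‖ ^ 2 := by
    rw [← sub_sub_sub_cancel_right x z p, norm_sub_sq_real, norm_sub_rev x p, norm_sub_rev z p]
  have hdescent : F p - F z ≤
      ⟪g, p - x⟫ - ⟪g, z - x⟫ + L / 2 * ‖p - x‖ ^ 2 - lam / 2 * ‖x - z‖ ^ 2 := by
    rw [norm_sub_rev x z]
    linarith
  have hscaled := mul_le_mul_of_nonneg_left hdescent hη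
  have hstep : η * L * ‖p - x‖ ^ 2 ≤ ‖p - x‖ ^ 2 :=
    mul_le_of_le_one_left (sq_nonneg _) hηL
  linarith

lemma norm_projected_gradient_step_sub_le (hK : Convex ℝ K)
    (hgrad : HasFDerivWithinAt F (innerSL ℝ (G z)) K z)
    (hupper : ∀ x ∈ K, ∀ y ∈ K, F y ≤ F x + ⟪G x, y - x⟫ + L / 2 * ‖y - x‖ ^ 2)
    (hlower : ∀ x ∈ K, ∀ y ∈ K, F x + ⟪G x, y - x⟫ + lam / 2 * ‖y - x‖ ^ 2 ≤ F y)
    (hη : 0 ≤ η) (hηL : η * L ≤ 1) (hηlam : 0 < 1 + η * lam)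
    (hz : z ∈ K) (hmin : IsMinOn F K z) (hx : x ∈ K)
    (hpK : p ∈ K) (hp : IsMinOn (fun w => ‖x - η • G x - w‖) K p) :
    ‖p - z‖ ≤ contractionConst η lam * ‖x - z‖ := by
  have hthree : 2 * η * (F p - F z) + ‖p - z‖ ^ 2 ≤ (1 - η * lam) * ‖x - z‖ ^ 2 :=
    projected_gradient_step_three_point hη hηL (hupper x hx p hpK) (hlower x hx z hz)
      (inner_sub_sub_nonpos_of_isMinOn_norm_sub hK hpK hp hz)
  have hgrowth : lam / 2 * ‖p - z‖ ^ 2 ≤ F p - F z := by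
    linarith [hlower z hz p hpK, inner_gradient_nonneg_of_isMinOn hK hz hmin hgrad hpK]
  refine le_contractionConst_mul hηlam (norm_nonneg _) ?_
  linarith [mul_le_mul_of_nonneg_left hgrowth hη]

lemma norm_projected_step_sub_le_add (hK : Convex ℝ K) (hη : 0 ≤ η)
    (hpK : p ∈ K) (hp : IsMinOn (fun w => ‖x - η • g - w‖) K p)
    (hqK : q ∈ K) (hq : IsMinOn (fun w => ‖x - η • v - w‖) K q) :
    ‖q - z‖ ≤ ‖p - z‖ + η * ‖g - v‖ := by
  have hperturb : ‖q - p‖ ≤ η * ‖g - v‖ :=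
    calc ‖q - p‖ ≤ ‖x - η • v - (x - η • g)‖ :=
          norm_sub_le_norm_sub_of_isMinOn_norm_sub hK hqK hpK hq hp
      _ = η * ‖g - v‖ := by
          rw [sub_sub_sub_cancel_left, ← smul_sub, norm_smul, Real.norm_of_nonneg hη]
  linarith [norm_sub_le_norm_sub_add_norm_sub q p z]

end GradientStep

-- `innerSL` expresses the gradient because `HasGradientAt` presupposes a complete space.
theorem predicted_gradient_step_approx_contraction_general
    {P : Type*} [PseudoMetricSpace P] {Θ : Set P} (hK : Convex ℝ K)
    {proj : E → E} (hprojMem : ∀ u, proj u ∈ K)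
    (hproj : ∀ u, IsMinOn (fun y => ‖u - y‖) K (proj u))
    {f : E → P → ℝ} {gradf : E → P → E}
    (hgrad : ∀ x ∈ K, ∀ θ ∈ Θ,
      HasFDerivWithinAt (fun y => f y θ) (innerSL ℝ (gradf x θ)) K x)
    {L lam Cθ : ℝ}
    (hupper : ∀ θ ∈ Θ, ∀ x ∈ K, ∀ y ∈ K,
      f y θ ≤ f x θ + ⟪gradf x θ, y - x⟫ + L / 2 * ‖y - x‖ ^ 2)
    (hlower : ∀ θ ∈ Θ, ∀ x ∈ K, ∀ y ∈ K,
      f x θ + ⟪gradf x θ, y - x⟫ + lam / 2 * ‖y - x‖ ^ 2 ≤ f y θ)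
    (hlip : ∀ x ∈ K, ∀ θ₁ ∈ Θ, ∀ θ₂ ∈ Θ, ‖gradf x θ₁ - gradf x θ₂‖ ≤ Cθ * dist θ₁ θ₂)
    {η : ℝ} (hη : 0 ≤ η) (hηL : η * L ≤ 1) (hηlam : 0 < 1 + η * lam)
    {θ θhat : P} (hθ : θ ∈ Θ) (hθhat : θhat ∈ Θ)
    {xstar : E} (hxstar : xstar ∈ K) (hmin : IsMinOn (fun y => f y θ) K xstar)
    {x : E} (hx : x ∈ K) :
    ‖proj (x - η • gradf x θhat) - xstar‖ ≤
      contractionConst η lam * ‖x - xstar‖ + η * Cθ * dist θ θhat := by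
  have hexact : ‖proj (x - η • gradf x θ) - xstar‖ ≤ contractionConst η lam * ‖x - xstar‖ :=
    norm_projected_gradient_step_sub_le (G := fun y => gradf y θ) hK (hgrad xstar hxstar θ hθ)
      (hupper θ hθ) (hlower θ hθ) hη hηL hηlam hxstar hmin hx (hprojMem _) (hproj _)
  calc ‖proj (x - η • gradf x θhat) - xstar‖
      ≤ ‖proj (x - η • gradf x θ) - xstar‖ + η * ‖gradf x θ - gradf x θhat‖ :=
        norm_projected_step_sub_le_add hK hη (hprojMem _) (hproj _)
          (hprojMem _) (hproj _)
    _ ≤ contractionConst η lam * ‖x - xstar‖ + η * (Cθ * dist θ θhat) := by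
        gcongr
        exact hlip x hx θ hθ θhat hθhat
    _ = contractionConst η lam * ‖x - xstar‖ + η * Cθ * dist θ θhat := by rw [mul_assoc]

end InnerProductSpace

/-- one projected gradient step with the predicted parameter is an approximate
contraction, with error controlled by the parameter prediction error. -/
theorem predicted_gradient_step_approx_contraction
    {E : Type*} [NormedAddCommGroup E] [InnerProductSpace ℝ E] [CompleteSpace E]
    {m : ℕ} (Θ : Set (EuclideanSpace ℝ (Fin m)))
    (K : Set E) (hKne : K.Nonempty) (hKcl : IsClosed K) (hKconv : Convex ℝ K)
    (proj : E → E) (hprojMem : ∀ u, proj u ∈ K)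
    (hproj : ∀ u, ∀ y ∈ K, ‖u - proj u‖ ≤ ‖u - y‖)
    (f : E → EuclideanSpace ℝ (Fin m) → ℝ)
    (gradf : E → EuclideanSpace ℝ (Fin m) → E)
    (hgrad : ∀ x θ, HasGradientAt (fun y => f y θ) (gradf x θ) x)
    (L lam Cθ : ℝ) (hlam : 0 < lam)
    -- (A2) L-smooth in x
    (hA2 : ∀ θ ∈ Θ, ∀ x y : E,
      f y θ ≤ f x θ + ⟪gradf x θ, y - x⟫ + L / 2 * ‖y - x‖ ^ 2)
    -- (A3) λ-strongly convex in x
    (hA3 : ∀ θ ∈ Θ, ∀ x y : E,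
      f y θ ≥ f x θ + ⟪gradf x θ, y - x⟫ + lam / 2 * ‖y - x‖ ^ 2)
    -- (A4) Lipschitz x-gradients in θ
    (hA4 : ∀ x ∈ K, ∀ θ₁ ∈ Θ, ∀ θ₂ ∈ Θ,
      ‖gradf x θ₁ - gradf x θ₂‖ ≤ Cθ * ‖θ₁ - θ₂‖)
    (η : ℝ) (hη : 0 < η) (hηL : η ≤ 1 / L)
    (θ θhat : EuclideanSpace ℝ (Fin m)) (hθ : θ ∈ Θ) (hθhat : θhat ∈ Θ)
    (xstar : E) (hxstarMem : xstar ∈ K)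
    (hxstarMin : ∀ y ∈ K, f xstar θ ≤ f y θ)
    (x : E) (hx : x ∈ K) :
    ‖proj (x - η • gradf x θhat) - xstar‖ ≤
      contractionConst η lam * ‖x - xstar‖ + η * Cθ * ‖θ - θhat‖ := by
  have hηL' : η * L ≤ 1 := (le_div_iff₀ (one_div_pos.1 (hη.trans_le hηL))).1 hηL
  simpa only [dist_eq_norm] using
    predicted_gradient_step_approx_contraction_general hKconv hprojMem hproj
      (fun x _ θ _ => (hgrad x θ).hasFDerivAt.hasFDerivWithinAt)
      (fun θ hθ x _ y _ => hA2 θ hθ x y) (fun θ hθ x _ y _ => hA3 θ hθ x y)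
      (by simpa only [dist_eq_norm] using hA4) hη.le hηL' (by positivity) hθ hθhat
      hxstarMem hxstarMin hx
end

section
/- Let E be a real inner product space, K ⊆ E a convex set, T ≥ 1, N ≥ 1, D > 0, and let f_1, …, f_T : E → ℝ each be convex on K with values contained in an interval of length D on K. Let x_t^i ∈ K for 1 ≤ t ≤ T, 1 ≤ i ≤ N, set γ = √(8/(T D²)), define weights by p_{i,0} = 1/N and p_{i,t} = p_{i,t−1} exp(−γ f_t(x_t^i)) / Σ_{j=1}^{N} p_{j,t−1} exp(−γ f_t(x_t^j)), and played points x_t = Σ_{i=1}^{N} p_{i,t−1} x_t^i. Then Σ_{t=1}^{T} f_t(x_t) − min_{1 ≤ i ≤ N} Σ_{t=1}^{T} f_t(x_t^i) ≤ (D √(2T) / 4)(1 + ln N). -/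
open Finset

/-!
Let `Z_t = ∑ i, p_{t-1,i} exp (-γ ℓ_t i)` be the normalizer of the `t`-th update. Taking logarithms
in `p_{t,i} = p_{t-1,i} exp (-γ ℓ_t i) / Z_t` writes the mix loss `-(log Z_t) / γ` as
`ℓ_t i + (log p_{t,i} - log p_{t-1,i}) / γ` for every expert `i`. Summed over `t` this telescopes,
so the total mix loss exceeds the total loss of expert `i` by at most `-(log p_{0,i}) / γ`. By
Jensen's inequality the loss of the played point is at most the `p_{t-1}`-average of the `ℓ_t i`,
and by Hoeffding's lemma that average exceeds the mix loss by at most `γ D² / 8`. The learning rate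
`γ = √(8 / (T D²))` makes `T γ D² / 8` equal to `1 / γ = D √(2T) / 4`.
-/

section Hoeffding

open MeasureTheory ProbabilityTheory

theorem cgf_le_of_mem_Icc {Ω : Type*} [MeasurableSpace Ω] {μ : Measure Ω}
    [IsProbabilityMeasure μ] {X : Ω → ℝ} {a b : ℝ} (hm : AEMeasurable X μ)
    (hX : ∀ᵐ ω ∂μ, X ω ∈ Set.Icc a b) (s : ℝ) :
    cgf X μ s ≤ s * μ[X] + s ^ 2 * (b - a) ^ 2 / 8 := by
  have h_centered : mgf (fun ω ↦ X ω - μ[X]) μ s = mgf X μ s * Real.exp (-(s * μ[X])) := by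
    simpa only [sub_eq_add_neg, mul_neg] using mgf_add_const (X := X) (μ := μ) (t := s) (-μ[X])
  have h_pos : 0 < mgf X μ s := mgf_pos (integrable_exp_mul_of_mem_Icc hm hX)
  have h_cgf := (hasSubgaussianMGF_of_mem_Icc hm hX).cgf_le s
  rw [cgf, h_centered, Real.log_mul h_pos.ne' (Real.exp_ne_zero _), Real.log_exp] at h_cgf
  have h_param : (((‖b - a‖₊ / 2) ^ 2 : NNReal) : ℝ) = (b - a) ^ 2 / 4 := by
    simp only [NNReal.coe_pow, NNReal.coe_div, coe_nnnorm, NNReal.coe_ofNat, div_pow,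
      Real.norm_eq_abs, sq_abs]
    norm_num
  rw [h_param] at h_cgf
  rw [cgf]
  linarith

theorem log_sum_mul_exp_le {ι : Type*} [Fintype ι] {p z : ι → ℝ} {a b : ℝ}
    (hp : p ∈ stdSimplex ℝ ι) (hz : ∀ i, z i ∈ Set.Icc a b) (s : ℝ) :
    Real.log (∑ i, p i * Real.exp (s * z i)) ≤
      s * ∑ i, p i * z i + s ^ 2 * (b - a) ^ 2 / 8 := by
  let : MeasurableSpace ι := ⊤
  have h_one : ∑ i, ENNReal.ofReal (p i) = 1 := by
    rw [← ENNReal.ofReal_sum_of_nonneg fun i _ ↦ hp.1 i, hp.2, ENNReal.ofReal_one]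
  let μ : Measure ι := (PMF.ofFintype (fun i ↦ ENNReal.ofReal (p i)) h_one).toMeasure
  have h_integral (g : ι → ℝ) : ∫ i, g i ∂μ = ∑ i, p i * g i := by
    simp only [μ, PMF.integral_eq_sum, PMF.ofFintype_apply, ENNReal.toReal_ofReal (hp.1 _),
      smul_eq_mul]
  simpa only [cgf, mgf, h_integral] using
    cgf_le_of_mem_Icc (μ := μ) (measurable_of_finite z).aemeasurable (.of_forall hz) s

end Hoeffding

section Gibbs

variable {ι : Type*} [Fintype ι]

/-- The normalizer `∑ i, p i * exp (-γ * ℓ i)` of the Gibbs posterior with prior `p`, loss `ℓ` and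
learning rate `γ`. -/
noncomputable def gibbsPartition (γ : ℝ) (p ℓ : ι → ℝ) : ℝ :=
  ∑ i, p i * Real.exp (-γ * ℓ i)

/-- The Gibbs posterior: the prior weights `p` after one exponential-weights update with loss `ℓ`
and learning rate `γ`. -/
noncomputable def gibbsPosterior (γ : ℝ) (p ℓ : ι → ℝ) (i : ι) : ℝ :=
  p i * Real.exp (-γ * ℓ i) / gibbsPartition γ p ℓ

/-- The mix loss (exponential mean) of `ℓ` under the weights `p`, against which the forecaster's
loss is compared; it is meant for `γ ≠ 0`. -/
noncomputable def mixLoss (γ : ℝ) (p ℓ : ι → ℝ) : ℝ :=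
  -Real.log (gibbsPartition γ p ℓ) / γ

variable {γ : ℝ} {p ℓ : ι → ℝ} {i : ι}

theorem gibbsPartition_pos (hp : p ∈ stdSimplex ℝ ι) : 0 < gibbsPartition γ p ℓ := by
  obtain ⟨i, hi⟩ : ∃ i, 0 < p i := by
    by_contra! h
    exact absurd hp.2 ((sum_nonpos fun i _ ↦ h i).trans_lt one_pos).ne
  exact sum_pos' (fun j _ ↦ mul_nonneg (hp.1 j) (Real.exp_pos _).le)
    ⟨i, mem_univ i, mul_pos hi (Real.exp_pos _)⟩

theorem gibbsPosterior_mem_stdSimplex (hp : p ∈ stdSimplex ℝ ι) :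
    gibbsPosterior γ p ℓ ∈ stdSimplex ℝ ι := by
  refine ⟨fun i ↦ div_nonneg (mul_nonneg (hp.1 i) (Real.exp_pos _).le)
    (gibbsPartition_pos hp).le, ?_⟩
  simp only [gibbsPosterior]
  rw [← sum_div]
  exact div_self (gibbsPartition_pos hp).ne'

theorem gibbsPosterior_pos (hp : p ∈ stdSimplex ℝ ι) (hi : 0 < p i) :
    0 < gibbsPosterior γ p ℓ i :=
  div_pos (mul_pos hi (Real.exp_pos _)) (gibbsPartition_pos hp)

theorem mixLoss_eq_add_log_gibbsPosterior_sub_log (hγ : γ ≠ 0) (hp : p ∈ stdSimplex ℝ ι)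
    (hi : 0 < p i) :
    mixLoss γ p ℓ = ℓ i + (Real.log (gibbsPosterior γ p ℓ i) - Real.log (p i)) / γ := by
  have h_log : Real.log (gibbsPosterior γ p ℓ i) =
      Real.log (p i) - γ * ℓ i - Real.log (gibbsPartition γ p ℓ) := by
    rw [gibbsPosterior, Real.log_div (mul_pos hi (Real.exp_pos _)).ne' (gibbsPartition_pos hp).ne',
      Real.log_mul hi.ne' (Real.exp_ne_zero _), Real.log_exp]
    ring
  rw [mixLoss, h_log]
  field_simp
  ring

theorem sum_mul_le_mixLoss_add {a b : ℝ} (hγ : 0 < γ) (hp : p ∈ stdSimplex ℝ ι)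
    (hℓ : ∀ i, ℓ i ∈ Set.Icc a b) :
    ∑ i, p i * ℓ i ≤ mixLoss γ p ℓ + γ * (b - a) ^ 2 / 8 := by
  have h_hoeffding : Real.log (gibbsPartition γ p ℓ) ≤
      -γ * ∑ i, p i * ℓ i + (-γ) ^ 2 * (b - a) ^ 2 / 8 := log_sum_mul_exp_le hp hℓ (-γ)
  refine le_of_mul_le_mul_left ?_ hγ
  rw [mixLoss, mul_add, mul_div_cancel₀ _ hγ.ne']
  linarith

end Gibbs

section Regret

variable {ι : Type*} [Fintype ι] {T : ℕ} {γ : ℝ} {p ℓ : ℕ → ι → ℝ} {i : ι}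

theorem mem_stdSimplex_of_gibbs_updates (hp0 : p 0 ∈ stdSimplex ℝ ι)
    (hp : ∀ t ∈ Icc 1 T, p t = gibbsPosterior γ (p (t - 1)) (ℓ t)) :
    ∀ t ≤ T, p t ∈ stdSimplex ℝ ι
  | 0, _ => hp0
  | t + 1, ht => by
    rw [hp (t + 1) (mem_Icc.2 ⟨by lia, ht⟩)]
    exact gibbsPosterior_mem_stdSimplex (mem_stdSimplex_of_gibbs_updates hp0 hp t (by lia))

theorem pos_of_gibbs_updates (hp0 : p 0 ∈ stdSimplex ℝ ι) (hi : 0 < p 0 i)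
    (hp : ∀ t ∈ Icc 1 T, p t = gibbsPosterior γ (p (t - 1)) (ℓ t)) :
    ∀ t ≤ T, 0 < p t i
  | 0, _ => hi
  | t + 1, ht => by
    rw [hp (t + 1) (mem_Icc.2 ⟨by lia, ht⟩)]
    exact gibbsPosterior_pos (mem_stdSimplex_of_gibbs_updates hp0 hp t (by lia))
      (pos_of_gibbs_updates hp0 hi hp t (by lia))

theorem sum_mixLoss_le (hγ : 0 < γ) (hp0 : p 0 ∈ stdSimplex ℝ ι) (hi : 0 < p 0 i)
    (hp : ∀ t ∈ Icc 1 T, p t = gibbsPosterior γ (p (t - 1)) (ℓ t)) :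
    ∑ t ∈ Icc 1 T, mixLoss γ (p (t - 1)) (ℓ t) ≤
      ∑ t ∈ Icc 1 T, ℓ t i - Real.log (p 0 i) / γ := by
  have h_simplex := mem_stdSimplex_of_gibbs_updates hp0 hp
  have h_pos := pos_of_gibbs_updates hp0 hi hp
  have h_step : ∀ t ∈ Icc 1 T, mixLoss γ (p (t - 1)) (ℓ t) =
      ℓ t i + (Real.log (p t i) - Real.log (p (t - 1) i)) / γ := fun t ht ↦ by
    have ht' : t - 1 ≤ T := (Nat.sub_le t 1).trans (mem_Icc.1 ht).2
    rw [hp t ht]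
    exact mixLoss_eq_add_log_gibbsPosterior_sub_log hγ.ne' (h_simplex _ ht') (h_pos _ ht')
  have h_telescope : ∑ t ∈ Icc 1 T, (Real.log (p t i) - Real.log (p (t - 1) i)) =
      Real.log (p T i) - Real.log (p 0 i) := by
    rw [← Ico_add_one_right_eq_Icc]
    exact sum_Ico_sub (fun t ↦ Real.log (p (t - 1) i)) T.succ_pos
  have h_last : Real.log (p T i) ≤ 0 :=
    Real.log_nonpos (h_pos T le_rfl).le (mem_Icc_of_mem_stdSimplex (h_simplex T le_rfl) i).2
  calc ∑ t ∈ Icc 1 T, mixLoss γ (p (t - 1)) (ℓ t)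
      = ∑ t ∈ Icc 1 T, ℓ t i + (Real.log (p T i) - Real.log (p 0 i)) / γ := by
        rw [sum_congr rfl h_step, sum_add_distrib, ← sum_div, h_telescope]
    _ ≤ ∑ t ∈ Icc 1 T, ℓ t i + (0 - Real.log (p 0 i)) / γ := by gcongr
    _ = ∑ t ∈ Icc 1 T, ℓ t i - Real.log (p 0 i) / γ := by ring

theorem sum_expected_loss_sub_le {D : ℝ} (hγ : 0 < γ) (hp0 : p 0 ∈ stdSimplex ℝ ι)
    (hi : 0 < p 0 i) (hp : ∀ t ∈ Icc 1 T, p t = gibbsPosterior γ (p (t - 1)) (ℓ t))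
    (hℓ : ∀ t ∈ Icc 1 T, ∃ a, ∀ j, ℓ t j ∈ Set.Icc a (a + D)) :
    ∑ t ∈ Icc 1 T, ∑ j, p (t - 1) j * ℓ t j - ∑ t ∈ Icc 1 T, ℓ t i ≤
      -Real.log (p 0 i) / γ + T * (γ * D ^ 2 / 8) := by
  have h_step : ∀ t ∈ Icc 1 T,
      ∑ j, p (t - 1) j * ℓ t j ≤ mixLoss γ (p (t - 1)) (ℓ t) + γ * D ^ 2 / 8 := fun t ht ↦ by
    obtain ⟨a, ha⟩ := hℓ t ht
    have ht' : t - 1 ≤ T := (Nat.sub_le t 1).trans (mem_Icc.1 ht).2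
    simpa only [add_sub_cancel_left] using
      sum_mul_le_mixLoss_add hγ (mem_stdSimplex_of_gibbs_updates hp0 hp _ ht') ha
  have h_sum := sum_le_sum h_step
  rw [sum_add_distrib, sum_const, Nat.card_Icc, Nat.add_sub_cancel, nsmul_eq_mul] at h_sum
  linarith [sum_mixLoss_le hγ hp0 hi hp, neg_div γ (Real.log (p 0 i))]

theorem sum_convex_loss_sub_le {E : Type*} [AddCommGroup E] [Module ℝ E] {K : Set E} {D : ℝ}
    {f : ℕ → E → ℝ} {y : ℕ → ι → E} (hγ : 0 < γ)
    (hconv : ∀ t ∈ Icc 1 T, ConvexOn ℝ K (f t))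
    (hbd : ∀ t ∈ Icc 1 T, ∃ a, ∀ x ∈ K, f t x ∈ Set.Icc a (a + D))
    (hy : ∀ t ∈ Icc 1 T, ∀ j, y t j ∈ K) (hp0 : p 0 ∈ stdSimplex ℝ ι) (hi : 0 < p 0 i)
    (hp : ∀ t ∈ Icc 1 T, p t = gibbsPosterior γ (p (t - 1)) fun j ↦ f t (y t j)) :
    ∑ t ∈ Icc 1 T, f t (∑ j, p (t - 1) j • y t j) - ∑ t ∈ Icc 1 T, f t (y t i) ≤
      -Real.log (p 0 i) / γ + T * (γ * D ^ 2 / 8) := by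
  have h_jensen : ∀ t ∈ Icc 1 T,
      f t (∑ j, p (t - 1) j • y t j) ≤ ∑ j, p (t - 1) j * f t (y t j) := fun t ht ↦ by
    have h_simplex := mem_stdSimplex_of_gibbs_updates hp0 hp (t - 1)
      ((Nat.sub_le t 1).trans (mem_Icc.1 ht).2)
    exact (hconv t ht).map_sum_le (fun j _ ↦ h_simplex.1 j) h_simplex.2 fun j _ ↦ hy t ht j
  have hℓ : ∀ t ∈ Icc 1 T, ∃ a, ∀ j, f t (y t j) ∈ Set.Icc a (a + D) := fun t ht ↦
    (hbd t ht).imp fun _ ha j ↦ ha _ (hy t ht j)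
  exact (sub_le_sub_right (sum_le_sum h_jensen) _).trans
    (sum_expected_loss_sub_le hγ hp0 hi hp hℓ)

end Regret

theorem div_add_mul_eq_of_eq_sqrt {T γ D : ℝ} (hT : 0 < T) (hD : 0 < D)
    (hγ : γ = Real.sqrt (8 / (T * D ^ 2))) (c : ℝ) :
    c / γ + T * (γ * D ^ 2 / 8) = D * Real.sqrt (2 * T) / 4 * (1 + c) := by
  have hγ_pos : 0 < γ := hγ ▸ Real.sqrt_pos.2 (by positivity)
  have h_sq : γ ^ 2 = 8 / (T * D ^ 2) := by rw [hγ, Real.sq_sqrt (by positivity)]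
  have h_inv : γ⁻¹ = D * Real.sqrt (2 * T) / 4 := by
    refine (sq_eq_sq₀ (by positivity) (by positivity)).1 ?_
    rw [inv_pow, h_sq, div_pow, mul_pow, Real.sq_sqrt (by positivity)]
    field_simp
    norm_num
  have h_balance : T * (γ * D ^ 2 / 8) = γ⁻¹ := by
    refine eq_inv_of_mul_eq_one_left ?_
    calc T * (γ * D ^ 2 / 8) * γ = T * D ^ 2 / 8 * γ ^ 2 := by ring
      _ = 1 := by rw [h_sq]; field_simp
  rw [h_balance, div_eq_mul_inv, h_inv]
  ring

theorem exp_weighted_forecaster_regret_optimized_general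
    {E : Type*} [AddCommGroup E] [Module ℝ E] {ι : Type*} [Fintype ι] {K : Set E} {T : ℕ}
    (hT : 1 ≤ T) {γ D : ℝ} (hD : 0 < D) (hγ : γ = Real.sqrt (8 / (T * D ^ 2)))
    {f : ℕ → E → ℝ} (hconv : ∀ t ∈ Icc 1 T, ConvexOn ℝ K (f t))
    (hbd : ∀ t ∈ Icc 1 T, ∃ a : ℝ, ∀ x ∈ K, a ≤ f t x ∧ f t x ≤ a + D)
    {xE : ℕ → ι → E} (hxE : ∀ t ∈ Icc 1 T, ∀ i, xE t i ∈ K) {p : ℕ → ι → ℝ}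
    (hp0 : ∀ i, p 0 i = 1 / (Fintype.card ι : ℝ))
    (hprec : ∀ t ∈ Icc 1 T, p t = gibbsPosterior γ (p (t - 1)) fun i ↦ f t (xE t i))
    {x : ℕ → E} (hx : ∀ t ∈ Icc 1 T, x t = ∑ i, p (t - 1) i • xE t i) (i : ι) :
    ∑ t ∈ Icc 1 T, f t (x t) - ∑ t ∈ Icc 1 T, f t (xE t i) ≤
      D * Real.sqrt (2 * T) / 4 * (1 + Real.log (Fintype.card ι)) := by
  have hT_pos : (0 : ℝ) < T := Nat.cast_pos.2 hT
  have hγ_pos : 0 < γ := hγ ▸ Real.sqrt_pos.2 (by positivity)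
  have h_card : (0 : ℝ) < Fintype.card ι := Nat.cast_pos.2 (Fintype.card_pos_iff.2 ⟨i⟩)
  have h_prior_pos (j : ι) : 0 < p 0 j := hp0 j ▸ one_div_pos.2 h_card
  have h_prior : p 0 ∈ stdSimplex ℝ ι := ⟨fun j ↦ (h_prior_pos j).le, by simp [hp0, h_card.ne']⟩
  have h_log : -Real.log (p 0 i) = Real.log (Fintype.card ι) := by
    rw [hp0, one_div, Real.log_inv, neg_neg]
  calc ∑ t ∈ Icc 1 T, f t (x t) - ∑ t ∈ Icc 1 T, f t (xE t i)
      = ∑ t ∈ Icc 1 T, f t (∑ j, p (t - 1) j • xE t j) - ∑ t ∈ Icc 1 T, f t (xE t i) := by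
        rw [sum_congr rfl fun t ht ↦ congrArg (f t) (hx t ht)]
    _ ≤ -Real.log (p 0 i) / γ + T * (γ * D ^ 2 / 8) :=
        sum_convex_loss_sub_le hγ_pos hconv hbd hxE h_prior (h_prior_pos i) hprec
    _ = D * Real.sqrt (2 * T) / 4 * (1 + Real.log (Fintype.card ι)) := by
        rw [h_log, div_add_mul_eq_of_eq_sqrt hT_pos hD hγ]

/-- regret bound for the exponentially weighted average forecaster
applied to convex losses, with the optimized learning rate `γ = √(8/(T D²))`. -/
theorem exp_weighted_forecaster_regret_optimized
    {E : Type*} [NormedAddCommGroup E] [InnerProductSpace ℝ E]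
    (K : Set E) (hKconv : Convex ℝ K)
    (T N : ℕ) (hT : 1 ≤ T) (hN : 1 ≤ N)
    (γ D : ℝ) (hD : 0 < D) (hγ : γ = Real.sqrt (8 / (T * D ^ 2)))
    (f : ℕ → E → ℝ)
    (hconv : ∀ t ∈ Icc 1 T, ConvexOn ℝ K (f t))
    (hbd : ∀ t ∈ Icc 1 T, ∃ a : ℝ, ∀ x ∈ K, a ≤ f t x ∧ f t x ≤ a + D)
    (xE : ℕ → Fin N → E) (hxE : ∀ t ∈ Icc 1 T, ∀ i, xE t i ∈ K)
    (p : ℕ → Fin N → ℝ)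
    (hp0 : ∀ i, p 0 i = 1 / (N : ℝ))
    (hprec : ∀ t ∈ Icc 1 T, ∀ i, p t i =
      p (t - 1) i * Real.exp (-γ * f t (xE t i)) /
        ∑ j, p (t - 1) j * Real.exp (-γ * f t (xE t j)))
    (x : ℕ → E) (hx : ∀ t ∈ Icc 1 T, x t = ∑ i, p (t - 1) i • xE t i) :
    ∑ t ∈ Icc 1 T, f t (x t)
      - Finset.univ.inf' (Finset.univ_nonempty_iff.mpr ⟨⟨0, hN⟩⟩)
          (fun i => ∑ t ∈ Icc 1 T, f t (xE t i))
      ≤ D * Real.sqrt (2 * T) / 4 * (1 + Real.log N) := by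
  exact sub_le_comm.1 <| le_inf' _ _ fun i _ ↦ sub_le_comm.1 <| by
    simpa only [Fintype.card_fin] using exp_weighted_forecaster_regret_optimized_general
      hT hD hγ hconv hbd hxE (by simpa using hp0) (fun t ht ↦ funext (hprec t ht)) hx i
end
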